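/- With the circuit-cutting setup and Pauli eigendecomposition data below, suppose f* : Fin K → Fin 4 is a golden cutting point for the observable O₁, i.e., Σ_{r : Fin K → {+1,-1}} w_{f*}(r) · tr(O₁ · ρ₁(P_{f*}(r))) = 0. Then the f* term may be dropped from the reconstruction: tr((O₁ ⊗ O₂) · ρ) = 2^{-K} · Σ_{f ≠ f*} Σ_{r, s : Fin K → {+1,-1}} w_f(r) · w_f(s) · tr(O₁ · ρ₁(P_f(r))) · tr(O₂ · ρ₂(P_f(s))), for every complex matrix O₂ indexed by C × B. -/

import Mathlib

open Matrix BigOperators Kronecker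

/-- A register of `n` qubits: length-`n` bitstrings. -/
abbrev Reg (n : ℕ) := Fin n → Fin 2

/-- The four Pauli matrices `I, X, Y, Z` as `2 × 2` complex matrices. -/
noncomputable def pauli : Fin 4 → Matrix (Fin 2) (Fin 2) ℂ :=
  ![!![1, 0; 0, 1], !![0, 1; 1, 0], !![0, -Complex.I; Complex.I, 0], !![1, 0; 0, -1]]

/-- The Pauli string `S_f`: the `K`-fold Kronecker product of the matrices `σ_{f k}`. -/
noncomputable def pauliString {K : ℕ} (f : Fin K → Fin 4) :
    Matrix (Reg K) (Reg K) ℂ :=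
  Matrix.of fun b b' => ∏ k, pauli (f k) (b k) (b' k)

/-- The projector `|0⟩⟨0|` onto the all-zeros state of a register. -/
noncomputable def zeroProj (α : Type*) [Zero α] [DecidableEq α] : Matrix α α ℂ :=
  Matrix.of fun a a' => if a = 0 ∧ a' = 0 then 1 else 0

/-- Upstream fragment data `ρ₁(M)`: the partial trace over the cut register `C` of
`(1_A ⊗ M) · U₁|0⟩⟨0|U₁ᴴ`. -/
noncomputable def rho1 {n₁ K : ℕ}
    (U₁ : Matrix (Reg n₁ × Reg K) (Reg n₁ × Reg K) ℂ)
    (M : Matrix (Reg K) (Reg K) ℂ) : Matrix (Reg n₁) (Reg n₁) ℂ :=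
  Matrix.of fun a a' => ∑ c, ∑ c',
    M c' c * (U₁ * zeroProj (Reg n₁ × Reg K) * U₁ᴴ) (a, c) (a', c')

/-- Downstream fragment data `ρ₂(M) = U₂ (M ⊗ |0⟩⟨0|_B) U₂ᴴ`. -/
noncomputable def rho2 {K n₂ : ℕ}
    (U₂ : Matrix (Reg K × Reg n₂) (Reg K × Reg n₂) ℂ)
    (M : Matrix (Reg K) (Reg K) ℂ) : Matrix (Reg K × Reg n₂) (Reg K × Reg n₂) ℂ :=
  U₂ * (M ⊗ₖ zeroProj (Reg n₂)) * U₂ᴴ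

/-- The full state
`ρ = (1_A ⊗ U₂)(U₁ ⊗ 1_B)|0⟩⟨0|(U₁ ⊗ 1_B)ᴴ(1_A ⊗ U₂)ᴴ`, indexed by `A × (C × B)`
(with `U₁ ⊗ 1_B` reindexed along `(A × C) × B ≃ A × (C × B)`). -/
noncomputable def fullState {n₁ K n₂ : ℕ}
    (U₁ : Matrix (Reg n₁ × Reg K) (Reg n₁ × Reg K) ℂ)
    (U₂ : Matrix (Reg K × Reg n₂) (Reg K × Reg n₂) ℂ) :
    Matrix (Reg n₁ × (Reg K × Reg n₂)) (Reg n₁ × (Reg K × Reg n₂)) ℂ :=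
  let V : Matrix (Reg n₁ × (Reg K × Reg n₂)) (Reg n₁ × (Reg K × Reg n₂)) ℂ :=
    Matrix.reindex (Equiv.prodAssoc _ _ _) (Equiv.prodAssoc _ _ _)
      (U₁ ⊗ₖ (1 : Matrix (Reg n₂) (Reg n₂) ℂ))
  ((1 : Matrix (Reg n₁) (Reg n₁) ℂ) ⊗ₖ U₂) * V *
    zeroProj (Reg n₁ × (Reg K × Reg n₂)) * Vᴴ *
    ((1 : Matrix (Reg n₁) (Reg n₁) ℂ) ⊗ₖ U₂)ᴴ

/-- The weight `w_f(r) = ∏_k λ_{f k}(r k)` attached to a string of eigenvalue labels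
`r : Fin K → ℤˣ` (the two-element type `{+1, -1}`). -/
def cutWeight {K : ℕ} (lam : Fin 4 → ℤˣ → ℝ) (f : Fin K → Fin 4) (r : Fin K → ℤˣ) : ℝ :=
  ∏ k, lam (f k) (r k)

/-- The Kronecker product `P_f(r)` of the rank-one eigenprojectors `v_{f k}(r k) v_{f k}(r k)ᴴ`. -/
noncomputable def pauliProj {K : ℕ} (v : Fin 4 → ℤˣ → Fin 2 → ℂ)
    (f : Fin K → Fin 4) (r : Fin K → ℤˣ) : Matrix (Reg K) (Reg K) ℂ :=
  Matrix.of fun c c' => ∏ k, v (f k) (r k) (c k) * star (v (f k) (r k) (c' k))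

/-!
Contracting the upstream state `U₁|0⟩⟨0|U₁ᴴ` against `O₁` gives an operator `G` on the cut qubits
such that `tr(O₁ ρ₁(M)) = tr(M G)` for all `M`, while the same contraction of the full state is
`ρ₂(G)`; hence `tr((O₁ ⊗ O₂) ρ) = tr(O₂ ρ₂(G))`. Pauli strings satisfy `∑_f tr(S_f G) S_f = 2^K G`,
so by linearity of `ρ₂` this trace is `2^{-K} ∑_f tr(O₁ ρ₁(S_f)) tr(O₂ ρ₂(S_f))`. Expanding each
`S_f` in its eigenprojectors factors the `f`-th term of the reconstruction in the same way, and the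
golden condition says precisely that the first factor vanishes at `f*`.
-/

section LeftContraction

variable {m n p R : Type*} [Fintype m]

/-- The contraction `tr_m ((O ⊗ 1) σ)` of a bipartite operator `σ` against an operator `O` on its
left factor, encoded entrywise as the trace of `O` against the blocks of `σ`. -/
def leftContraction [NonUnitalNonAssocSemiring R]
    (O : Matrix m m R) (σ : Matrix (m × n) (m × n) R) : Matrix n n R :=
  of fun c c' => trace (O * σ.submatrix (·, c) (·, c'))

lemma leftContraction_apply [NonUnitalNonAssocSemiring R]
    (O : Matrix m m R) (σ : Matrix (m × n) (m × n) R) (c c' : n) :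
    leftContraction O σ c c' = ∑ a, ∑ a', O a a' * σ (a', c) (a, c') := rfl

lemma leftContraction_reindex_prodAssoc_kronecker [NonUnitalSemiring R]
    (O : Matrix m m R) (σ : Matrix (m × n) (m × n) R) (τ : Matrix p p R) :
    leftContraction O (reindex (Equiv.prodAssoc m n p) (Equiv.prodAssoc m n p) (σ ⊗ₖ τ)) =
      leftContraction O σ ⊗ₖ τ := by
  ext ⟨c, b⟩ ⟨c', b'⟩
  simp [leftContraction_apply, Finset.sum_mul, mul_assoc]

variable [Fintype n] [CommSemiring R]

lemma trace_kronecker_mul (O : Matrix m m R) (M : Matrix n n R) (σ : Matrix (m × n) (m × n) R) :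
    trace ((O ⊗ₖ M) * σ) = trace (M * leftContraction O σ) := by
  calc trace ((O ⊗ₖ M) * σ)
      = ∑ a, ∑ c, ∑ a', ∑ c', O a a' * M c c' * σ (a', c') (a, c) := by
        simp only [trace, diag_apply, mul_apply, kronecker_apply, Fintype.sum_prod_type]
    _ = ∑ c, ∑ c', ∑ a, ∑ a', O a a' * M c c' * σ (a', c') (a, c) := by
        rw [Finset.sum_comm]
        refine Finset.sum_congr rfl fun c _ => ?_
        rw [Finset.sum_comm (s := (Finset.univ : Finset n))]
        exact Finset.sum_congr rfl fun a _ => Finset.sum_comm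
    _ = trace (M * leftContraction O σ) := by
        simp only [trace, diag_apply, mul_apply, leftContraction_apply, Finset.mul_sum,
          mul_left_comm, mul_assoc]

lemma leftContraction_one_kronecker_mul_mul_one_kronecker [DecidableEq m]
    (O : Matrix m m R) (U V : Matrix n n R) (σ : Matrix (m × n) (m × n) R) :
    leftContraction O ((1 ⊗ₖ U) * σ * (1 ⊗ₖ V)) = U * leftContraction O σ * V := by
  refine ext_iff_trace_mul_left.mpr fun M => ?_
  calc trace (M * leftContraction O ((1 ⊗ₖ U) * σ * (1 ⊗ₖ V)))
      = trace ((1 ⊗ₖ V) * (O ⊗ₖ M) * (1 ⊗ₖ U) * σ) := by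
        rw [← trace_kronecker_mul, ← Matrix.mul_assoc, trace_mul_comm]
        simp only [Matrix.mul_assoc]
    _ = trace ((O ⊗ₖ (V * M * U)) * σ) := by
        simp only [← mul_kronecker_mul, Matrix.one_mul, Matrix.mul_one]
    _ = trace (M * (U * leftContraction O σ * V)) := by
        rw [trace_kronecker_mul, ← Matrix.mul_assoc M, trace_mul_comm _ V]
        simp only [Matrix.mul_assoc]

end LeftContraction

section CompleteFamily

variable {ι n R : Type*} [Fintype ι] [DecidableEq n] [CommSemiring R]

/-- The completeness relation `∑ i, S i ⊗ S i = N • SWAP` of a family of matrices, encoded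
entrywise. The Pauli matrices satisfy it with `N = 2`. -/
def IsCompleteFamily (N : R) (S : ι → Matrix n n R) : Prop :=
  ∀ a b c d, ∑ i, S i a b * S i c d = if a = d ∧ b = c then N else 0

lemma IsCompleteFamily.sum_trace_mul_smul [Fintype n] {N : R} {S : ι → Matrix n n R}
    (hS : IsCompleteFamily N S) (G : Matrix n n R) :
    ∑ i, trace (S i * G) • S i = N • G := by
  ext c d
  calc (∑ i, trace (S i * G) • S i) c d
      = ∑ i, ∑ a, ∑ b, S i a b * S i c d * G b a := by
        simp only [Matrix.sum_apply, Matrix.smul_apply, smul_eq_mul, trace, diag_apply,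
          mul_apply, Finset.sum_mul, mul_right_comm]
    _ = ∑ a, ∑ b, (∑ i, S i a b * S i c d) * G b a := by
        simp only [Finset.sum_mul]
        rw [Finset.sum_comm]
        exact Finset.sum_congr rfl fun a _ => Finset.sum_comm
    _ = (N • G) c d := by
        simp [hS _ _ _ _, ite_and]

end CompleteFamily

section PiKronecker

variable {κ ι m n R : Type*} [Fintype κ] [CommSemiring R]

/-- The Kronecker product of a finite family of matrices, with rows and columns indexed by
functions. It is the common form of `pauliString` and `pauliProj`. -/
def piKronecker (M : κ → Matrix m n R) : Matrix (κ → m) (κ → n) R :=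
  of fun b b' => ∏ k, M k (b k) (b' k)

lemma piKronecker_smul (c : κ → R) (M : κ → Matrix m n R) :
    piKronecker (fun k => c k • M k) = (∏ k, c k) • piKronecker M := by
  ext b b'
  simp [piKronecker, Finset.prod_mul_distrib]

variable [DecidableEq κ] [Fintype ι]

lemma piKronecker_sum (M : κ → ι → Matrix m n R) :
    piKronecker (fun k => ∑ i, M k i) = ∑ r : κ → ι, piKronecker fun k => M k (r k) := by
  ext b b'
  simp only [piKronecker, of_apply, Matrix.sum_apply, Fintype.prod_sum]

lemma IsCompleteFamily.piKronecker [DecidableEq n] {N : R} {S : ι → Matrix n n R}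
    (hS : IsCompleteFamily N S) :
    IsCompleteFamily (N ^ Fintype.card κ)
      (fun f : κ → ι => _root_.piKronecker fun k => S (f k)) := by
  intro a b c d
  calc ∑ f : κ → ι, (∏ k, S (f k) (a k) (b k)) * ∏ k, S (f k) (c k) (d k)
      = ∏ k, ∑ i, S i (a k) (b k) * S i (c k) (d k) := by
        simp only [← Finset.prod_mul_distrib, Fintype.prod_sum]
    _ = ∏ k, if a k = d k ∧ b k = c k then N else 0 := by
        simp only [hS _ _ _ _]
    _ = if a = d ∧ b = c then N ^ Fintype.card κ else 0 := by
        simp only [Fintype.prod_ite_zero, forall_and, funext_iff, Finset.prod_const,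
          Finset.card_univ]

end PiKronecker

lemma isCompleteFamily_pauli : IsCompleteFamily 2 pauli := by
  intro a b c d
  rw [Fin.sum_univ_four]
  fin_cases a <;> fin_cases b <;> fin_cases c <;> fin_cases d <;>
    simp [pauli] <;> norm_num

lemma isCompleteFamily_pauliString (K : ℕ) :
    IsCompleteFamily (2 ^ K) (pauliString (K := K)) := by
  have isComplete_card := isCompleteFamily_pauli.piKronecker (κ := Fin K)
  rwa [Fintype.card_fin] at isComplete_card

/-- Each Pauli matrix is the sum over `r = ±1` of the rank-one matrices `v_j(r) v_j(r)ᴴ` weighted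
by `λ_j(r)`, as in the spectral decomposition of `σ_j`. -/
def IsPauliRankOneExpansion (v : Fin 4 → ℤˣ → Fin 2 → ℂ) (lam : Fin 4 → ℤˣ → ℝ) : Prop :=
  ∀ j, pauli j = ∑ r : ℤˣ, (lam j r : ℂ) • of fun i i' => v j r i * star (v j r i')

lemma sum_cutWeight_smul_pauliProj {K : ℕ} {v : Fin 4 → ℤˣ → Fin 2 → ℂ} {lam : Fin 4 → ℤˣ → ℝ}
    (hdecomp : IsPauliRankOneExpansion v lam) (f : Fin K → Fin 4) :
    ∑ r, (cutWeight lam f r : ℂ) • pauliProj v f r = pauliString f := by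
  calc ∑ r, (cutWeight lam f r : ℂ) • pauliProj v f r
      = ∑ r : Fin K → ℤˣ, piKronecker fun k =>
          (lam (f k) (r k) : ℂ) • of fun i i' => v (f k) (r k) i * star (v (f k) (r k) i') := by
        simp only [piKronecker_smul, cutWeight, Complex.ofReal_prod]
        rfl
    _ = piKronecker fun k => pauli (f k) := by
        simp only [hdecomp _, piKronecker_sum]
    _ = pauliString f := rfl

section ZeroProj

variable (α β γ : Type*) [Zero α] [Zero β] [Zero γ] [DecidableEq α] [DecidableEq β] [DecidableEq γ]

lemma zeroProj_prod : zeroProj (α × β) = zeroProj α ⊗ₖ zeroProj β := by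
  ext ⟨a, b⟩ ⟨a', b'⟩
  simp only [zeroProj, of_apply, kronecker_apply, Prod.mk_eq_zero, ite_zero_mul_ite_zero, mul_one,
    and_and_and_comm]

lemma reindex_prodAssoc_zeroProj_kronecker :
    reindex (Equiv.prodAssoc α β γ) (Equiv.prodAssoc α β γ) (zeroProj (α × β) ⊗ₖ zeroProj γ) =
      zeroProj (α × β × γ) := by
  simp only [zeroProj_prod, kronecker_assoc]

end ZeroProj

section Reconstruction

variable {n₁ K n₂ : ℕ} (U₁ : Matrix (Reg n₁ × Reg K) (Reg n₁ × Reg K) ℂ)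
  (U₂ : Matrix (Reg K × Reg n₂) (Reg K × Reg n₂) ℂ)
  (O₁ : Matrix (Reg n₁) (Reg n₁) ℂ) (O₂ : Matrix (Reg K × Reg n₂) (Reg K × Reg n₂) ℂ)

lemma trace_mul_rho1 (M : Matrix (Reg K) (Reg K) ℂ) :
    trace (O₁ * rho1 U₁ M) =
      trace (M * leftContraction O₁ (U₁ * zeroProj (Reg n₁ × Reg K) * U₁ᴴ)) := by
  set σ := U₁ * zeroProj (Reg n₁ × Reg K) * U₁ᴴ with hσ
  calc trace (O₁ * rho1 U₁ M)
      = ∑ a, ∑ a', ∑ c, ∑ c', O₁ a a' * M c' c * σ (a', c) (a, c') := by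
        simp only [trace, diag_apply, mul_apply (M := O₁), rho1, of_apply, ← hσ, Finset.mul_sum,
          mul_assoc]
    _ = ∑ a, ∑ c', ∑ a', ∑ c, O₁ a a' * M c' c * σ (a', c) (a, c') := by
        refine Finset.sum_congr rfl fun a _ => ?_
        rw [Finset.sum_comm (s := (Finset.univ : Finset (Reg K)))]
        exact Finset.sum_congr rfl fun a' _ => Finset.sum_comm
    _ = trace ((O₁ ⊗ₖ M) * σ) := by
        simp only [trace, diag_apply, mul_apply (N := σ), kronecker_apply, Fintype.sum_prod_type]
    _ = trace (M * leftContraction O₁ σ) := trace_kronecker_mul O₁ M σ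

lemma trace_mul_rho1_sum_smul {ι : Type*} (s : Finset ι) (c : ι → ℂ)
    (M : ι → Matrix (Reg K) (Reg K) ℂ) :
    trace (O₁ * rho1 U₁ (∑ i ∈ s, c i • M i)) = ∑ i ∈ s, c i * trace (O₁ * rho1 U₁ (M i)) := by
  simp only [trace_mul_rho1, Finset.sum_mul, smul_mul, trace_sum, trace_smul, smul_eq_mul]

lemma trace_mul_rho2_sum_smul {ι : Type*} (s : Finset ι) (c : ι → ℂ)
    (M : ι → Matrix (Reg K) (Reg K) ℂ) :
    trace (O₂ * rho2 U₂ (∑ i ∈ s, c i • M i)) = ∑ i ∈ s, c i * trace (O₂ * rho2 U₂ (M i)) := by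
  have sum_smul_kronecker : (∑ i ∈ s, c i • M i) ⊗ₖ zeroProj (Reg n₂) =
      ∑ i ∈ s, c i • (M i ⊗ₖ zeroProj (Reg n₂)) := by
    ext
    simp [Matrix.sum_apply, Finset.sum_mul, mul_assoc]
  simp only [rho2, sum_smul_kronecker, Matrix.mul_sum, Matrix.sum_mul, Matrix.mul_smul,
    Matrix.smul_mul, trace_sum, trace_smul, smul_eq_mul]

lemma fullState_eq_reindex_kronecker :
    fullState U₁ U₂ = ((1 : Matrix (Reg n₁) (Reg n₁) ℂ) ⊗ₖ U₂) *
      reindex (Equiv.prodAssoc _ _ _) (Equiv.prodAssoc _ _ _)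
        ((U₁ * zeroProj (Reg n₁ × Reg K) * U₁ᴴ) ⊗ₖ zeroProj (Reg n₂)) *
      ((1 : Matrix (Reg n₁) (Reg n₁) ℂ) ⊗ₖ U₂ᴴ) := by
  have reindex_conj : reindex (Equiv.prodAssoc _ _ _) (Equiv.prodAssoc _ _ _)
        ((U₁ * zeroProj (Reg n₁ × Reg K) * U₁ᴴ) ⊗ₖ zeroProj (Reg n₂)) =
      reindex (Equiv.prodAssoc _ _ _) (Equiv.prodAssoc _ _ _)
        (U₁ ⊗ₖ (1 : Matrix (Reg n₂) (Reg n₂) ℂ)) *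
      zeroProj (Reg n₁ × (Reg K × Reg n₂)) *
      (reindex (Equiv.prodAssoc _ _ _) (Equiv.prodAssoc _ _ _)
        (U₁ ⊗ₖ (1 : Matrix (Reg n₂) (Reg n₂) ℂ)))ᴴ := by
    rw [← reindex_prodAssoc_zeroProj_kronecker, conjTranspose_reindex]
    simp only [reindex_apply, submatrix_mul_equiv, conjTranspose_kronecker, ← mul_kronecker_mul,
      conjTranspose_one, Matrix.one_mul, Matrix.mul_one]
  rw [reindex_conj]
  simp only [fullState, conjTranspose_kronecker, conjTranspose_one, Matrix.mul_assoc]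

lemma leftContraction_fullState :
    leftContraction O₁ (fullState U₁ U₂) =
      rho2 U₂ (leftContraction O₁ (U₁ * zeroProj (Reg n₁ × Reg K) * U₁ᴴ)) := by
  rw [fullState_eq_reindex_kronecker, leftContraction_one_kronecker_mul_mul_one_kronecker,
    leftContraction_reindex_prodAssoc_kronecker, rho2]

theorem trace_kronecker_mul_fullState_eq_sum_pauliString :
    trace ((O₁ ⊗ₖ O₂) * fullState U₁ U₂) =
      ((2 : ℂ) ^ K)⁻¹ * ∑ f : Fin K → Fin 4,
        trace (O₁ * rho1 U₁ (pauliString f)) * trace (O₂ * rho2 U₂ (pauliString f)) := by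
  set G := leftContraction O₁ (U₁ * zeroProj (Reg n₁ × Reg K) * U₁ᴴ)
  have pauli_expansion : G = ∑ f : Fin K → Fin 4,
      (((2 : ℂ) ^ K)⁻¹ * trace (pauliString f * G)) • pauliString f := by
    simp only [mul_smul, ← Finset.smul_sum]
    rw [(isCompleteFamily_pauliString K).sum_trace_mul_smul,
      inv_smul_smul₀ (pow_ne_zero K two_ne_zero)]
  calc trace ((O₁ ⊗ₖ O₂) * fullState U₁ U₂)
      = trace (O₂ * rho2 U₂ G) := by
        rw [trace_kronecker_mul, leftContraction_fullState]
    _ = ∑ f : Fin K → Fin 4, ((2 : ℂ) ^ K)⁻¹ * trace (pauliString f * G) *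
          trace (O₂ * rho2 U₂ (pauliString f)) := by
        conv_lhs => rw [pauli_expansion, trace_mul_rho2_sum_smul]
    _ = _ := by
        simp only [trace_mul_rho1, Finset.mul_sum, mul_assoc, G]

variable {v : Fin 4 → ℤˣ → Fin 2 → ℂ} {lam : Fin 4 → ℤˣ → ℝ}

lemma sum_cutWeight_mul_trace_rho1 (hdecomp : IsPauliRankOneExpansion v lam)
    (f : Fin K → Fin 4) :
    ∑ r, (cutWeight lam f r : ℂ) * trace (O₁ * rho1 U₁ (pauliProj v f r)) =
      trace (O₁ * rho1 U₁ (pauliString f)) := by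
  rw [← sum_cutWeight_smul_pauliProj hdecomp, trace_mul_rho1_sum_smul]

lemma sum_cutWeight_mul_trace_rho2 (hdecomp : IsPauliRankOneExpansion v lam)
    (f : Fin K → Fin 4) :
    ∑ r, (cutWeight lam f r : ℂ) * trace (O₂ * rho2 U₂ (pauliProj v f r)) =
      trace (O₂ * rho2 U₂ (pauliString f)) := by
  rw [← sum_cutWeight_smul_pauliProj hdecomp, trace_mul_rho2_sum_smul]

lemma sum_sum_cutWeight_mul_trace_rho1_mul_trace_rho2 (hdecomp : IsPauliRankOneExpansion v lam)
    (f : Fin K → Fin 4) :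
    ∑ r : Fin K → ℤˣ, ∑ s : Fin K → ℤˣ,
        ((cutWeight lam f r * cutWeight lam f s : ℝ) : ℂ) *
          trace (O₁ * rho1 U₁ (pauliProj v f r)) * trace (O₂ * rho2 U₂ (pauliProj v f s)) =
      trace (O₁ * rho1 U₁ (pauliString f)) * trace (O₂ * rho2 U₂ (pauliString f)) := by
  rw [← sum_cutWeight_mul_trace_rho1 U₁ O₁ hdecomp, ← sum_cutWeight_mul_trace_rho2 U₂ O₂ hdecomp,
    Finset.sum_mul_sum]
  push_cast
  simp only [mul_assoc, mul_left_comm]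

end Reconstruction

theorem golden_cut_drop_general {n₁ K n₂ : ℕ}
    (U₁ : Matrix (Reg n₁ × Reg K) (Reg n₁ × Reg K) ℂ)
    (U₂ : Matrix (Reg K × Reg n₂) (Reg K × Reg n₂) ℂ)
    {v : Fin 4 → ℤˣ → Fin 2 → ℂ} {lam : Fin 4 → ℤˣ → ℝ}
    (hdecomp : IsPauliRankOneExpansion v lam)
    (O₁ : Matrix (Reg n₁) (Reg n₁) ℂ)
    (fstar : Fin K → Fin 4)
    (hgolden : ∑ r : Fin K → ℤˣ,
      (cutWeight lam fstar r : ℂ) * trace (O₁ * rho1 U₁ (pauliProj v fstar r)) = 0)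
    (O₂ : Matrix (Reg K × Reg n₂) (Reg K × Reg n₂) ℂ) :
    trace ((O₁ ⊗ₖ O₂) * fullState U₁ U₂) =
      ((2 : ℂ) ^ K)⁻¹ *
        ∑ f ∈ Finset.univ.erase fstar, ∑ r : Fin K → ℤˣ, ∑ s : Fin K → ℤˣ,
          ((cutWeight lam f r * cutWeight lam f s : ℝ) : ℂ) *
            trace (O₁ * rho1 U₁ (pauliProj v f r)) *
            trace (O₂ * rho2 U₂ (pauliProj v f s)) := by
  have golden_trace_eq_zero : trace (O₁ * rho1 U₁ (pauliString fstar)) = 0 := by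
    rw [← sum_cutWeight_mul_trace_rho1 U₁ O₁ hdecomp, hgolden]
  simp only [sum_sum_cutWeight_mul_trace_rho1_mul_trace_rho2 U₁ U₂ O₁ O₂ hdecomp]
  rw [Finset.sum_erase _ (by rw [golden_trace_eq_zero, zero_mul]),
    trace_kronecker_mul_fullState_eq_sum_pauliString]

/-- If `f*` is a golden cutting point for `O₁`, i.e.
`∑_r w_{f*}(r) tr(O₁ ρ₁(P_{f*}(r))) = 0`, then the `f*` term may be dropped from the
reconstruction of `tr((O₁ ⊗ O₂) ρ)`, for every observable `O₂` on the downstream register. -/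
theorem golden_cut_drop {n₁ K n₂ : ℕ}
    (U₁ : Matrix (Reg n₁ × Reg K) (Reg n₁ × Reg K) ℂ)
    (U₂ : Matrix (Reg K × Reg n₂) (Reg K × Reg n₂) ℂ)
    (hU₁ : U₁ᴴ * U₁ = 1) (hU₁' : U₁ * U₁ᴴ = 1)
    (hU₂ : U₂ᴴ * U₂ = 1) (hU₂' : U₂ * U₂ᴴ = 1)
    (v : Fin 4 → ℤˣ → Fin 2 → ℂ) (lam : Fin 4 → ℤˣ → ℝ)
    (hunit : ∀ j r, ∑ i, v j r i * star (v j r i) = 1)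
    (horth : ∀ j, ∑ i, v j 1 i * star (v j (-1) i) = 0)
    (hdecomp : ∀ j, pauli j =
      ∑ r : ℤˣ, (lam j r : ℂ) • Matrix.of (fun i i' => v j r i * star (v j r i')))
    (O₁ : Matrix (Reg n₁) (Reg n₁) ℂ)
    (fstar : Fin K → Fin 4)
    (hgolden : ∑ r : Fin K → ℤˣ,
      ((cutWeight lam fstar r : ℝ) : ℂ) *
        Matrix.trace (O₁ * rho1 U₁ (pauliProj v fstar r)) = 0) :
    ∀ O₂ : Matrix (Reg K × Reg n₂) (Reg K × Reg n₂) ℂ,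
      Matrix.trace ((O₁ ⊗ₖ O₂) * fullState U₁ U₂) =
        ((2 : ℂ) ^ K)⁻¹ *
          ∑ f ∈ Finset.univ.erase fstar, ∑ r : Fin K → ℤˣ, ∑ s : Fin K → ℤˣ,
            ((cutWeight lam f r * cutWeight lam f s : ℝ) : ℂ) *
              Matrix.trace (O₁ * rho1 U₁ (pauliProj v f r)) *
              Matrix.trace (O₂ * rho2 U₂ (pauliProj v f s)) :=
  golden_cut_drop_general U₁ U₂ hdecomp O₁ fstar hgolden
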